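/- Consider the diversity-preserving UCB algorithm run on a bandit problem ν whose arm distributions belong to D_{[0,1]}, where P is a finite polytope, at least one p ∈ Ext(P) satisfies Δ(p) > 0, and p★_min(ν) > 0. Let N★(t) = Σ_{p ∈ Opt(ν)∩Ext(P)} N_p(t) be the number of rounds up to t at which an optimal mixed action was played, where N_p(t) = Σ_{s≤t} 1{p_s = p}. Then P(N★(t) ≤ t/2) = O(1/t²) as t → ∞; in particular Σ_{t≥1} P(N★(t) ≤ t/2) < +∞. -/

import Mathlib

/-!
The proof is a direct trajectory argument at a fixed large horizon `t`, outside an event of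
probability `O(1/t²)`.

* Confidence intervals. For each arm `a` the process `exp (l S_a(s) - l² N_a(s) / 8)`, where `S_a`
  is the centred cumulated reward, has mean at most one by Hoeffding's lemma
  (`lintegral_exp_rewardDev_le`). A union bound over the values of `N_a(s)` shows that the
  confidence interval of arm `a` fails at time `s` with probability at most `2/s³`
  (`measure_badConf_le`); summing over `s ∈ [t/4, t]` costs `O(1/t²)`.

* Predicted versus realised pulls. With the predictable weights `w_r = 1/√(max {N_a(r-1), 1})`,
  the process `exp (∑_{r ≤ t} w_r (p_{r,a}/2 - 1{A_r = a}))` also has mean at most one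
  (`lintegral_exp_armDev_le`), so that with probability at least `1 - 1/t²`
  `∑ w_r p_{r,a} ≤ 2 ∑ w_r 1{A_r = a} + 4 log t ≤ 6 √t + 4 log t`.

* Conclusion. While the confidence intervals hold, a suboptimal vertex played at round `r`
  satisfies `Δ ≤ 2 √(2 log t) ∑_a w_r p_{r,a}` (`gap_le_weights`). Summing over the suboptimal
  rounds after `t/4`, of which there are at least `t/4 - 1` when `N★(t) ≤ t/2`, gives
  `Δ (t/4 - 1) ≤ 2 √(2 log t) K (6 √t + 4 log t)`, which fails for large `t` (`growth_lt`).

Since the processes live on an arbitrary probability space, conditional laws are handled through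
lower integrals of nonnegative functions, without regular conditional distributions.
-/

open MeasureTheory Finset

noncomputable section

namespace DivBanditUCB

/-- The inner product `⟨p, q⟩ = ∑ a p_a q_a` on `ℝ^K`. -/
def dot {K : ℕ} (p q : Fin K → ℝ) : ℝ := ∑ a, p a * q a

/-- `N_a(t)`: the number of times arm `a` was pulled during rounds `1, …, t`. -/
def pulls {Ω : Type*} {K : ℕ} (A : ℕ → Ω → Fin K) (a : Fin K) (t : ℕ) (ω : Ω) : ℕ :=
  ∑ s ∈ Finset.Icc 1 t, if A s ω = a then 1 else 0

/-- `μ̂_a(t)`: the empirical mean of the rewards obtained when arm `a` was played,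
with the convention `μ̂_a(t) = 1` when `N_a(t) = 0`. -/
def empMean {Ω : Type*} {K : ℕ} (A : ℕ → Ω → Fin K) (Y : ℕ → Ω → ℝ) (a : Fin K) (t : ℕ)
    (ω : Ω) : ℝ :=
  if pulls A a t ω = 0 then 1
  else (∑ s ∈ Finset.Icc 1 t, if A s ω = a then Y s ω else 0) / (pulls A a t ω : ℝ)

/-- The upper confidence bound `U_a(t) = μ̂_a(t) + sqrt(2 log t / max{N_a(t), 1})`,
with `U_a(0) = 1`. -/
def ucbIndex {Ω : Type*} {K : ℕ} (A : ℕ → Ω → Fin K) (Y : ℕ → Ω → ℝ) (a : Fin K) (t : ℕ)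
    (ω : Ω) : ℝ :=
  if t = 0 then 1
  else empMean A Y a t ω + Real.sqrt (2 * Real.log t / (max (pulls A a t ω) 1 : ℕ))

/-- The σ-algebra generated by the history `A_1, Y_1, …, A_t, Y_t`. -/
def hist {Ω : Type*} {K : ℕ} (A : ℕ → Ω → Fin K) (Y : ℕ → Ω → ℝ) (t : ℕ) :
    MeasurableSpace Ω :=
  ⨆ s ∈ Set.Icc 1 t,
    (MeasurableSpace.comap (A s) inferInstance ⊔ MeasurableSpace.comap (Y s) inferInstance)

/-! ### Conditioning on a sub-σ-algebra, in terms of lower integrals -/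

/-- If `h` is a version of the conditional probability of `B` given `m`, then integrating an
`m`-measurable `f` over `B` amounts to integrating `f * h`. No integrability of `f` is needed. -/
lemma setLIntegral_of_condExp {Ω : Type*} {m m0 : MeasurableSpace Ω} (hm : m ≤ m0)
    (P : Measure Ω) [IsProbabilityMeasure P] {B : Set Ω} (hB : MeasurableSet[m0] B) {h : Ω → ℝ}
    (hh : P[B.indicator (fun _ => (1 : ℝ)) | m] =ᵐ[P] h) {f : Ω → ENNReal}
    (hf : Measurable[m] f) :
    ∫⁻ ω in B, f ω ∂P = ∫⁻ ω, f ω * ENNReal.ofReal (h ω) ∂P := by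
  set c : Ω → ℝ := P[B.indicator (fun _ => (1 : ℝ)) | m] with hc
  have hint : Integrable (B.indicator (fun _ => (1 : ℝ))) P :=
    (integrable_const (1 : ℝ)).indicator hB
  have hcm : Measurable c := (stronglyMeasurable_condExp.mono hm).measurable
  have hc0 : 0 ≤ᵐ[P] c :=
    condExp_nonneg (Filter.Eventually.of_forall fun ω =>
      Set.indicator_nonneg (fun _ _ => zero_le_one) ω)
  have hcd : Measurable fun ω => ENNReal.ofReal (c ω) := hcm.ennreal_ofReal
  -- The two sides come from measures which agree on `m`.
  have key : (P.restrict B).trim hm = (P.withDensity fun ω => ENNReal.ofReal (c ω)).trim hm := by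
    refine @Measure.ext _ m _ _ fun s hs => ?_
    rw [trim_measurableSet_eq hm hs, trim_measurableSet_eq hm hs,
      Measure.restrict_apply (hm _ hs), withDensity_apply _ (hm _ hs),
      ← ofReal_integral_eq_lintegral_ofReal integrable_condExp.integrableOn
        (ae_restrict_of_ae hc0), setIntegral_condExp hm hint hs,
      setIntegral_indicator hB]
    simp
  calc ∫⁻ ω in B, f ω ∂P = ∫⁻ ω, f ω ∂((P.restrict B).trim hm) := (lintegral_trim hm hf).symm
    _ = ∫⁻ ω, f ω ∂(P.withDensity fun ω => ENNReal.ofReal (c ω)) := by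
        rw [key, lintegral_trim hm hf]
    _ = ∫⁻ ω, f ω * ENNReal.ofReal (c ω) ∂P := by
        rw [lintegral_withDensity_eq_lintegral_mul _ hcd (hf.mono hm le_rfl)]
        simp only [Pi.mul_apply, mul_comm]
    _ = ∫⁻ ω, f ω * ENNReal.ofReal (h ω) ∂P := by
        refine lintegral_congr_ae ?_
        filter_upwards [hh] with ω hω
        rw [hω]

lemma setLIntegral_compl_of_condExp {Ω : Type*} {m m0 : MeasurableSpace Ω} (hm : m ≤ m0)
    (P : Measure Ω) [IsProbabilityMeasure P] {B : Set Ω} (hB : MeasurableSet[m0] B) {h : Ω → ℝ}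
    (hh : P[B.indicator (fun _ => (1 : ℝ)) | m] =ᵐ[P] h) {f : Ω → ENNReal}
    (hf : Measurable[m] f) :
    ∫⁻ ω in Bᶜ, f ω ∂P = ∫⁻ ω, f ω * ENNReal.ofReal (1 - h ω) ∂P := by
  refine setLIntegral_of_condExp hm P hB.compl ?_ hf
  have e : Bᶜ.indicator (fun _ => (1 : ℝ)) =
      (fun _ => (1 : ℝ)) - B.indicator (fun _ => (1 : ℝ)) := by
    rw [Set.indicator_compl]
  rw [e]
  have h1 := condExp_sub (μ := P) (integrable_const (1 : ℝ))
    ((integrable_const (1 : ℝ)).indicator hB) m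
  rw [condExp_const hm] at h1
  filter_upwards [h1, hh] with ω h1 h2
  rw [h1, Pi.sub_apply, h2]

/-- If, given `m`, the variable `Y` has law `κ` on a set `B`, then for an `m`-measurable `f`
supported on `B` the factors `f` and `g ∘ Y` decouple. -/
lemma lintegral_mul_of_condLaw {Ω : Type*} {m m0 : MeasurableSpace Ω} (hm : m ≤ m0)
    (P : Measure Ω) [IsProbabilityMeasure P] {Y : Ω → ℝ} (hY : Measurable Y)
    {κ : Ω → Measure ℝ} {ρ : Measure ℝ} [IsProbabilityMeasure ρ]
    (hκ : ∀ s : Set ℝ, MeasurableSet s →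
      P[({ω | Y ω ∈ s}).indicator (fun _ => (1 : ℝ)) | m] =ᵐ[P] fun ω => (κ ω s).toReal)
    {f : Ω → ENNReal} (hf : Measurable[m] f) (hfB : ∀ ω, f ω ≠ 0 → κ ω = ρ)
    {g : ℝ → ENNReal} (hg : Measurable g) :
    ∫⁻ ω, f ω * g (Y ω) ∂P = (∫⁻ ω, f ω ∂P) * ∫⁻ x, g x ∂ρ := by
  have hf' : Measurable f := hf.mono hm le_rfl
  have key : (P.withDensity f).map Y = (∫⁻ ω, f ω ∂P) • ρ := by
    ext s hs
    rw [Measure.map_apply hY hs, withDensity_apply _ (hY hs), Measure.smul_apply, smul_eq_mul,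
      setLIntegral_of_condExp hm P (hY hs) (hκ s hs) hf, ← lintegral_mul_const _ hf']
    refine lintegral_congr fun ω => ?_
    by_cases h0 : f ω = 0
    · simp [h0]
    · rw [hfB ω h0, ENNReal.ofReal_toReal (measure_ne_top _ _)]
  have := congrArg (fun Q : Measure ℝ => ∫⁻ x, g x ∂Q) key
  simp only [lintegral_smul_measure, smul_eq_mul] at this
  rw [lintegral_map hg hY, lintegral_withDensity_eq_lintegral_mul _ hf' (g := fun ω => g (Y ω)) (hg.comp hY)]
    at this
  simpa using this

/-! ### Measurability with respect to the history -/

section history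

variable {Ω : Type*} {K : ℕ} {A : ℕ → Ω → Fin K} {Y : ℕ → Ω → ℝ}

lemma hist_le [mΩ : MeasurableSpace Ω] (hA : ∀ t, Measurable (A t)) (hY : ∀ t, Measurable (Y t)) (t : ℕ) :
    hist A Y t ≤ mΩ :=
  iSup₂_le fun s _ => sup_le (hA s).comap_le (hY s).comap_le

lemma hist_mono {s t : ℕ} (h : s ≤ t) : hist A Y s ≤ hist A Y t :=
  biSup_mono fun _ hr => ⟨hr.1, hr.2.trans h⟩

lemma measurable_hist_A {s t : ℕ} (h1 : 1 ≤ s) (h2 : s ≤ t) : Measurable[hist A Y t] (A s) :=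
  Measurable.of_comap_le <| le_trans le_sup_left
    (le_iSup₂ (f := fun s (_ : s ∈ Set.Icc 1 t) => MeasurableSpace.comap (A s) inferInstance ⊔
      MeasurableSpace.comap (Y s) inferInstance) s ⟨h1, h2⟩)

lemma measurable_hist_Y {s t : ℕ} (h1 : 1 ≤ s) (h2 : s ≤ t) : Measurable[hist A Y t] (Y s) :=
  Measurable.of_comap_le <| le_trans le_sup_right
    (le_iSup₂ (f := fun s (_ : s ∈ Set.Icc 1 t) => MeasurableSpace.comap (A s) inferInstance ⊔
      MeasurableSpace.comap (Y s) inferInstance) s ⟨h1, h2⟩)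

lemma measurableSet_hist_A {s t : ℕ} (h1 : 1 ≤ s) (h2 : s ≤ t) (a : Fin K) :
    MeasurableSet[hist A Y t] {ω | A s ω = a} :=
  measurable_hist_A h1 h2 (measurableSet_singleton a)

lemma measurable_pulls (a : Fin K) (t : ℕ) : Measurable[hist A Y t] (pulls A a t) := by
  unfold pulls
  refine Finset.measurable_fun_sum _ fun s hs => ?_
  rw [Finset.mem_Icc] at hs
  exact Measurable.ite (measurableSet_hist_A hs.1 hs.2 a) measurable_const measurable_const

end history

/-! ### Concentration of the empirical means -/

/-- The centred cumulated reward `∑_{s ≤ t, A_s = a} (Y_s - m)` of arm `a`. -/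
def rewardDev {Ω : Type*} {K : ℕ} (A : ℕ → Ω → Fin K) (Y : ℕ → Ω → ℝ) (m : ℝ) (a : Fin K)
    (t : ℕ) (ω : Ω) : ℝ :=
  ∑ s ∈ Finset.Icc 1 t, if A s ω = a then Y s ω - m else 0

lemma measurable_rewardDev {Ω : Type*} {K : ℕ} {A : ℕ → Ω → Fin K} {Y : ℕ → Ω → ℝ} (m : ℝ)
    (a : Fin K) (t : ℕ) : Measurable[hist A Y t] (rewardDev A Y m a t) := by
  unfold rewardDev
  refine Finset.measurable_fun_sum _ fun s hs => ?_
  rw [Finset.mem_Icc] at hs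
  exact Measurable.ite (measurableSet_hist_A hs.1 hs.2 a)
    ((measurable_hist_Y hs.1 hs.2).sub_const m) measurable_const

lemma rewardDev_succ {Ω : Type*} {K : ℕ} (A : ℕ → Ω → Fin K) (Y : ℕ → Ω → ℝ) (m : ℝ)
    (a : Fin K) (t : ℕ) (ω : Ω) : rewardDev A Y m a (t + 1) ω =
      rewardDev A Y m a t ω + if A (t + 1) ω = a then Y (t + 1) ω - m else 0 := by
  unfold rewardDev
  rw [Finset.sum_Icc_succ_top (by omega)]

lemma pulls_succ {Ω : Type*} {K : ℕ} (A : ℕ → Ω → Fin K) (a : Fin K) (t : ℕ) (ω : Ω) :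
    pulls A a (t + 1) ω = pulls A a t ω + if A (t + 1) ω = a then 1 else 0 := by
  unfold pulls
  rw [Finset.sum_Icc_succ_top (by omega)]

lemma pulls_le {Ω : Type*} {K : ℕ} (A : ℕ → Ω → Fin K) (a : Fin K) (t : ℕ) (ω : Ω) :
    pulls A a t ω ≤ t := by
  induction t with
  | zero => simp [pulls]
  | succ t ih => rw [pulls_succ]; split_ifs <;> omega

/-- Hoeffding's lemma for a law on `[0,1]`, as a bound on a lower integral. -/
lemma hoeffding_lintegral (ρ : Measure ℝ) [IsProbabilityMeasure ρ]
    (hρ : ρ (Set.Icc (0 : ℝ) 1)ᶜ = 0) (l : ℝ) :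
    ∫⁻ x, ENNReal.ofReal (Real.exp (l * (x - ∫ y, y ∂ρ) - l ^ 2 / 8)) ∂ρ ≤ 1 := by
  have hmem : ∀ᵐ x ∂ρ, (fun x : ℝ => x) x ∈ Set.Icc (0 : ℝ) 1 := by
    rw [ae_iff]; exact hρ
  have hsub := ProbabilityTheory.hasSubgaussianMGF_of_mem_Icc (μ := ρ) measurable_id'.aemeasurable
    hmem
  have hint := hsub.integrable_exp_mul l
  have hle := hsub.mgf_le l
  have hint2 : Integrable (fun x => Real.exp (l * (x - ∫ y, y ∂ρ) - l ^ 2 / 8)) ρ := by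
    simp_rw [Real.exp_sub]
    exact hint.div_const _
  rw [← ofReal_integral_eq_lintegral_ofReal hint2
    (Filter.Eventually.of_forall fun _ => (Real.exp_pos _).le), ENNReal.ofReal_le_one]
  simp_rw [Real.exp_sub (_ * _)]
  rw [integral_div, div_le_one (Real.exp_pos _)]
  refine hle.trans (Real.exp_le_exp.2 (le_of_eq ?_))
  norm_num
  ring

lemma measure_exp_ge_le {Ω : Type*} [MeasurableSpace Ω] {P : Measure Ω} {X : Ω → ℝ} (hX : Measurable X) (x : ℝ)
    (h : ∫⁻ ω, ENNReal.ofReal (Real.exp (X ω)) ∂P ≤ 1) :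
    P {ω | x ≤ X ω} ≤ ENNReal.ofReal (Real.exp (-x)) := by
  have h1 := mul_meas_ge_le_lintegral (μ := P)
    (f := fun ω => ENNReal.ofReal (Real.exp (X ω))) (by fun_prop) (ENNReal.ofReal (Real.exp x))
  have h2 : {ω | x ≤ X ω} ⊆
      {ω | ENNReal.ofReal (Real.exp x) ≤ ENNReal.ofReal (Real.exp (X ω))} := fun ω hω =>
    ENNReal.ofReal_le_ofReal (Real.exp_le_exp.2 hω)
  rw [Real.exp_neg, ENNReal.ofReal_inv_of_pos (Real.exp_pos x), ← one_div]
  refine (measure_mono h2).trans ?_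
  rw [ENNReal.le_div_iff_mul_le (Or.inl (by simp [Real.exp_pos])) (Or.inl ENNReal.ofReal_ne_top),
    mul_comm]
  exact h1.trans h

section concentration

variable {Ω : Type*} [MeasurableSpace Ω] {K : ℕ} {P : Measure Ω} [IsProbabilityMeasure P]
  {A : ℕ → Ω → Fin K} {Y : ℕ → Ω → ℝ}

/-- The exponential supermartingale `exp (l S_a(t) - l² N_a(t) / 8)` has mean at most `1`. -/
lemma lintegral_exp_rewardDev_le (hA : ∀ t, Measurable (A t)) (hY : ∀ t, Measurable (Y t))
    (ν : Fin K → Measure ℝ) (hνprob : ∀ a, IsProbabilityMeasure (ν a))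
    (hνsupp : ∀ a, (ν a) (Set.Icc (0 : ℝ) 1)ᶜ = 0)
    (hreward : ∀ t, 1 ≤ t → ∀ s : Set ℝ, MeasurableSet s →
      (P[({ω | Y t ω ∈ s}).indicator (fun _ => (1 : ℝ)) |
          hist A Y (t - 1) ⊔ MeasurableSpace.comap (A t) inferInstance])
        =ᵐ[P] fun ω => ((ν (A t ω)) s).toReal) (a : Fin K) (l : ℝ) (t : ℕ) :
    ∫⁻ ω, ENNReal.ofReal (Real.exp (l * rewardDev A Y (∫ x, x ∂(ν a)) a t ω
      - l ^ 2 / 8 * (pulls A a t ω : ℝ))) ∂P ≤ 1 := by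
  induction t with
  | zero => simp [rewardDev, pulls]
  | succ t ih =>
    set m := ∫ x, x ∂(ν a) with hm
    set F : Ω → ENNReal := fun ω => ENNReal.ofReal (Real.exp (l * rewardDev A Y m a t ω
      - l ^ 2 / 8 * (pulls A a t ω : ℝ))) with hF
    set g : ℝ → ENNReal := fun x => ENNReal.ofReal (Real.exp (l * (x - m) - l ^ 2 / 8)) with hg
    set B : Set Ω := {ω | A (t + 1) ω = a} with hBdef
    have hB : MeasurableSet B := hA (t + 1) (measurableSet_singleton a)
    have hFm : Measurable[hist A Y t] F := by
      refine Measurable.ennreal_ofReal (Real.measurable_exp.comp ?_)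
      exact ((measurable_rewardDev m a t).const_mul l).sub
        ((measurable_from_top.comp (measurable_pulls a t)).const_mul _)
    have hgm : Measurable g := by fun_prop
    have hGle : hist A Y t ⊔ MeasurableSpace.comap (A (t + 1)) inferInstance ≤ ‹_› :=
      sup_le (hist_le hA hY t) (hA (t + 1)).comap_le
    have hBG : MeasurableSet[hist A Y t ⊔ MeasurableSpace.comap (A (t + 1)) inferInstance] B :=
      (le_sup_right : _ ≤ hist A Y t ⊔ MeasurableSpace.comap (A (t + 1)) inferInstance) _
        ⟨{a}, measurableSet_singleton a, rfl⟩
    have hfm : Measurable[hist A Y t ⊔ MeasurableSpace.comap (A (t + 1)) inferInstance]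
        (B.indicator F) := (hFm.mono le_sup_left le_rfl).indicator hBG
    have h1 := lintegral_mul_of_condLaw hGle P (hY (t + 1)) (ρ := ν a)
      (hreward (t + 1) (by omega)) hfm
      (fun ω hω => by
        have : ω ∈ B := by
          by_contra h
          exact hω (Set.indicator_of_notMem h _)
        exact congrArg ν this) hgm
    calc _ = ∫⁻ ω in B, ENNReal.ofReal (Real.exp (l * rewardDev A Y m a (t + 1) ω
              - l ^ 2 / 8 * (pulls A a (t + 1) ω : ℝ))) ∂P
            + ∫⁻ ω in Bᶜ, ENNReal.ofReal (Real.exp (l * rewardDev A Y m a (t + 1) ω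
              - l ^ 2 / 8 * (pulls A a (t + 1) ω : ℝ))) ∂P := (lintegral_add_compl _ hB).symm
      _ = ∫⁻ ω in B, F ω * g (Y (t + 1) ω) ∂P + ∫⁻ ω in Bᶜ, F ω ∂P := by
          congr 1
          · refine setLIntegral_congr_fun hB fun ω hω => ?_
            have hω' : A (t + 1) ω = a := hω
            simp only [hF, hg]
            rw [← ENNReal.ofReal_mul (Real.exp_pos _).le, ← Real.exp_add, rewardDev_succ,
              pulls_succ, if_pos hω', if_pos hω']
            congr 2
            push_cast
            ring
          · refine setLIntegral_congr_fun hB.compl fun ω hω => ?_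
            have hω' : ¬ A (t + 1) ω = a := hω
            simp only [hF]
            rw [rewardDev_succ, pulls_succ, if_neg hω', if_neg hω']
            simp
      _ = ∫⁻ ω, B.indicator F ω * g (Y (t + 1) ω) ∂P + ∫⁻ ω in Bᶜ, F ω ∂P := by
          congr 1
          rw [← lintegral_indicator hB]
          refine lintegral_congr fun ω => ?_
          by_cases h : ω ∈ B <;> simp [h]
      _ ≤ ∫⁻ ω in B, F ω ∂P + ∫⁻ ω in Bᶜ, F ω ∂P := by
          refine add_le_add ?_ le_rfl
          rw [h1, lintegral_indicator hB]
          exact mul_le_of_le_one_right' (hoeffding_lintegral (ν a) (hνsupp a) l)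
      _ = ∫⁻ ω, F ω ∂P := lintegral_add_compl _ hB
      _ ≤ 1 := ih

/-- The event that at time `t` the empirical mean of arm `a` (with true mean `m`) falls outside
the confidence interval used by the algorithm. -/
def badConf (A : ℕ → Ω → Fin K) (Y : ℕ → Ω → ℝ) (m : ℝ) (a : Fin K) (t : ℕ) : Set Ω :=
  {ω | 1 ≤ pulls A a t ω ∧ (pulls A a t ω : ℝ) * Real.sqrt (2 * Real.log t / pulls A a t ω)
    < |rewardDev A Y m a t ω|}

/-- Union bound over the possible values `n ≤ t` of `N_a(t)` and over the two signs; for fixed `n`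
the Chernoff bound with parameter `± 4 √(2 log t / n)` gives probability at most `t⁻⁴`. -/
lemma measure_badConf_le (hA : ∀ t, Measurable (A t)) (hY : ∀ t, Measurable (Y t))
    (ν : Fin K → Measure ℝ) (hνprob : ∀ a, IsProbabilityMeasure (ν a))
    (hνsupp : ∀ a, (ν a) (Set.Icc (0 : ℝ) 1)ᶜ = 0)
    (hreward : ∀ t, 1 ≤ t → ∀ s : Set ℝ, MeasurableSet s →
      (P[({ω | Y t ω ∈ s}).indicator (fun _ => (1 : ℝ)) |
          hist A Y (t - 1) ⊔ MeasurableSpace.comap (A t) inferInstance])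
        =ᵐ[P] fun ω => ((ν (A t ω)) s).toReal) (a : Fin K) (t : ℕ) (ht : 1 ≤ t) :
    P.real (badConf A Y (∫ x, x ∂(ν a)) a t) ≤ 2 / (t : ℝ) ^ 3 := by
  set m := ∫ x, x ∂(ν a) with hm
  have ht0 : (0 : ℝ) < t := by exact_mod_cast ht
  have hlog : 0 ≤ Real.log t := Real.log_nonneg (by exact_mod_cast ht)
  set x : ℕ → ℝ := fun n => Real.sqrt (2 * Real.log t / n) with hx
  set E : ℝ → ℕ → Set Ω := fun ε n => {ω | 4 * Real.log t ≤
    (ε * (4 * x n)) * rewardDev A Y m a t ω - (ε * (4 * x n)) ^ 2 / 8 * (pulls A a t ω : ℝ)} with hE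
  have hEle : ∀ ε n, P.real (E ε n) ≤ 1 / (t : ℝ) ^ 4 := by
    intro ε n
    have h := measure_exp_ge_le (P := P) (X := fun ω => (ε * (4 * x n)) * rewardDev A Y m a t ω
      - (ε * (4 * x n)) ^ 2 / 8 * (pulls A a t ω : ℝ)) ?_ (4 * Real.log t)
      (lintegral_exp_rewardDev_le hA hY ν hνprob hνsupp hreward a _ t)
    · refine ENNReal.toReal_le_of_le_ofReal (by positivity) (h.trans (le_of_eq ?_))
      congr 1
      rw [Real.exp_neg, one_div, mul_comm, Real.exp_mul, Real.exp_log ht0]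
      norm_cast
    · have h1 := (measurable_rewardDev (A := A) (Y := Y) m a t).mono (hist_le hA hY t) le_rfl
      have h2 : Measurable fun ω => (pulls A a t ω : ℝ) := measurable_from_top.comp
        ((measurable_pulls (A := A) (Y := Y) a t).mono (hist_le hA hY t) le_rfl)
      exact (h1.const_mul _).sub (h2.const_mul _)
  have hsub : badConf A Y m a t ⊆ ⋃ n ∈ Finset.Icc 1 t, (E 1 n ∪ E (-1) n) := by
    rintro ω ⟨hn, hω⟩
    simp only [Set.mem_iUnion]
    refine ⟨pulls A a t ω, Finset.mem_Icc.2 ⟨hn, pulls_le A a t ω⟩, ?_⟩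
    set n := pulls A a t ω with hnn
    have hn0 : (0 : ℝ) < n := by exact_mod_cast hn
    have hxx : x n ^ 2 * n = 2 * Real.log t := by
      rw [hx]
      simp only
      rw [Real.sq_sqrt (by positivity)]
      field_simp
    have hx0 : 0 ≤ x n := Real.sqrt_nonneg _
    rcases lt_abs.1 hω with h | h
    · left
      have := mul_le_mul_of_nonneg_left h.le hx0
      simp only [hE, Set.mem_ofPred_eq, ← hnn]
      change x n * (n * x n) ≤ _ at this
      nlinarith
    · right
      have := mul_le_mul_of_nonneg_left h.le hx0
      simp only [hE, Set.mem_ofPred_eq, ← hnn]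
      change x n * (n * x n) ≤ _ at this
      nlinarith
  calc P.real (badConf A Y m a t) ≤ P.real (⋃ n ∈ Finset.Icc 1 t, (E 1 n ∪ E (-1) n)) :=
        measureReal_mono hsub (measure_ne_top _ _)
    _ ≤ ∑ n ∈ Finset.Icc 1 t, P.real (E 1 n ∪ E (-1) n) := measureReal_biUnion_finset_le _ _
    _ ≤ ∑ n ∈ Finset.Icc 1 t, 2 / (t : ℝ) ^ 4 := by
        refine Finset.sum_le_sum fun n _ => (measureReal_union_le _ _).trans ?_
        have h1 := hEle 1 n
        have h2 := hEle (-1) n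
        calc _ ≤ 1 / (t : ℝ) ^ 4 + 1 / (t : ℝ) ^ 4 := add_le_add h1 h2
          _ = _ := by ring
    _ = 2 / (t : ℝ) ^ 3 := by
        rw [Finset.sum_const, Nat.card_Icc, nsmul_eq_mul]
        simp only [Nat.add_sub_cancel]
        field_simp

end concentration

/-! ### Comparing the expected and the realised number of weighted pulls -/

/-- The exploration weight `1 / √(max {N_a(t), 1})`. -/
def weight {Ω : Type*} {K : ℕ} (A : ℕ → Ω → Fin K) (a : Fin K) (t : ℕ) (ω : Ω) : ℝ :=
  1 / Real.sqrt ((max (pulls A a t ω) 1 : ℕ) : ℝ)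

lemma weight_nonneg {Ω : Type*} {K : ℕ} (A : ℕ → Ω → Fin K) (a : Fin K) (t : ℕ) (ω : Ω) :
    0 ≤ weight A a t ω := by unfold weight; positivity

lemma weight_le_one {Ω : Type*} {K : ℕ} (A : ℕ → Ω → Fin K) (a : Fin K) (t : ℕ) (ω : Ω) :
    weight A a t ω ≤ 1 := by
  unfold weight
  have h : (1 : ℝ) ≤ Real.sqrt ((max (pulls A a t ω) 1 : ℕ) : ℝ) := by
    rw [Real.one_le_sqrt]
    exact_mod_cast le_max_right _ _
  exact (div_le_one (by linarith)).2 h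

lemma measurable_weight {Ω : Type*} {K : ℕ} {A : ℕ → Ω → Fin K} {Y : ℕ → Ω → ℝ}
    (a : Fin K) (t : ℕ) : Measurable[hist A Y t] (weight A a t) :=
  (measurable_from_top (f := fun n : ℕ => 1 / Real.sqrt ((max n 1 : ℕ) : ℝ))).comp
    (measurable_pulls a t)

/-- The comparison process `∑_{r ≤ t} w_r (p_{r,a} / 2 - 1{A_r = a})`, where `w_r` is the
exploration weight of arm `a` before round `r`. -/
def armDev {Ω : Type*} {K : ℕ} (p : ℕ → Ω → Fin K → ℝ) (A : ℕ → Ω → Fin K) (a : Fin K)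
    (t : ℕ) (ω : Ω) : ℝ :=
  ∑ r ∈ Finset.Icc 1 t, (weight A a (r - 1) ω * p r ω a / 2
    - if A r ω = a then weight A a (r - 1) ω else 0)

lemma armDev_succ {Ω : Type*} {K : ℕ} (p : ℕ → Ω → Fin K → ℝ) (A : ℕ → Ω → Fin K) (a : Fin K)
    (t : ℕ) (ω : Ω) : armDev p A a (t + 1) ω = armDev p A a t ω +
      (weight A a t ω * p (t + 1) ω a / 2 - if A (t + 1) ω = a then weight A a t ω else 0) := by
  unfold armDev
  rw [Finset.sum_Icc_succ_top (by omega)]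
  simp

lemma measurable_armDev {Ω : Type*} {K : ℕ} {p : ℕ → Ω → Fin K → ℝ} {A : ℕ → Ω → Fin K}
    {Y : ℕ → Ω → ℝ} (hpmeas : ∀ t, 1 ≤ t → Measurable[hist A Y (t - 1)] (p t))
    (a : Fin K) (t : ℕ) : Measurable[hist A Y t] (armDev p A a t) := by
  unfold armDev
  refine Finset.measurable_fun_sum _ fun r hr => ?_
  rw [Finset.mem_Icc] at hr
  have hw : Measurable[hist A Y t] (weight A a (r - 1)) :=
    (measurable_weight a (r - 1)).mono (hist_mono (by omega)) le_rfl
  have hp : Measurable[hist A Y t] fun ω => p r ω a :=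
    (measurable_pi_apply a).comp ((hpmeas r hr.1).mono (hist_mono (by omega)) le_rfl)
  exact ((hw.mul hp).div_const 2).sub
    (Measurable.ite (measurableSet_hist_A hr.1 hr.2 a) hw measurable_const)

/-- A one-step bound: `E exp (w q / 2 - w 1_B) ≤ 1` when `B` has probability `q`. -/
lemma exp_step_le {w q : ℝ} (hw0 : 0 ≤ w) (hw1 : w ≤ 1) (hq0 : 0 ≤ q) :
    Real.exp (w * q / 2) * (Real.exp (-w) * q + (1 - q)) ≤ 1 := by
  have h1 : Real.exp (-w) ≤ 1 - w / 2 := by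
    have h2 : Real.exp (-w) * Real.exp w = 1 := by rw [← Real.exp_add]; simp
    have h3 := Real.quadratic_le_exp_of_nonneg hw0
    have h4 := Real.exp_pos (-w)
    nlinarith [mul_nonneg hw0 (sub_nonneg.2 hw1), mul_nonneg h4.le (sub_nonneg.2 h3),
      mul_nonneg hw0 (mul_nonneg hw0 (sub_nonneg.2 hw1))]
  have h2 : Real.exp (-w) * q + (1 - q) ≤ Real.exp (-(w * q / 2)) := by
    have := Real.add_one_le_exp (-(w * q / 2))
    nlinarith
  calc _ ≤ Real.exp (w * q / 2) * Real.exp (-(w * q / 2)) := by gcongr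
    _ = 1 := by rw [← Real.exp_add]; simp

/-- The process `exp (∑_{r ≤ t} w_r (p_{r,a} / 2 - 1{A_r = a}))` is a supermartingale started at
`1`, since `w_r` and `p_r` are determined by the history before round `r`. -/
lemma lintegral_exp_armDev_le {Ω : Type*} [MeasurableSpace Ω] {K : ℕ} {P : Measure Ω}
    [IsProbabilityMeasure P] {p : ℕ → Ω → Fin K → ℝ} {A : ℕ → Ω → Fin K} {Y : ℕ → Ω → ℝ}
    (hA : ∀ t, Measurable (A t)) (hY : ∀ t, Measurable (Y t))
    (hpmeas : ∀ t, 1 ≤ t → Measurable[hist A Y (t - 1)] (p t))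
    (hp0 : ∀ t, 1 ≤ t → ∀ ω a, 0 ≤ p t ω a ∧ p t ω a ≤ 1)
    (harm : ∀ t, 1 ≤ t → ∀ a : Fin K,
      (P[({ω | A t ω = a}).indicator (fun _ => (1 : ℝ)) | hist A Y (t - 1)])
        =ᵐ[P] fun ω => p t ω a) (a : Fin K) (t : ℕ) :
    ∫⁻ ω, ENNReal.ofReal (Real.exp (armDev p A a t ω)) ∂P ≤ 1 := by
  induction t with
  | zero => simp [armDev]
  | succ t ih =>
    set w := weight A a t with hwdef
    set q : Ω → ℝ := fun ω => p (t + 1) ω a with hq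
    set B : Set Ω := {ω | A (t + 1) ω = a} with hBdef
    have hB : MeasurableSet B := hA (t + 1) (measurableSet_singleton a)
    have hle := hist_le hA hY t
    have hwm : Measurable[hist A Y t] w := measurable_weight a t
    have hqm : Measurable[hist A Y t] q :=
      (measurable_pi_apply a).comp (hpmeas (t + 1) (by omega))
    have hdm := measurable_armDev hpmeas a t
    set G : Ω → ENNReal := fun ω =>
      ENNReal.ofReal (Real.exp (armDev p A a t ω + w ω * q ω / 2)) with hG
    set G' : Ω → ENNReal := fun ω =>
      ENNReal.ofReal (Real.exp (armDev p A a t ω + w ω * q ω / 2 - w ω)) with hG'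
    have he : Measurable[hist A Y t] fun ω => armDev p A a t ω + w ω * q ω / 2 :=
      hdm.add ((hwm.mul hqm).div_const 2)
    have hGm : Measurable[hist A Y t] G := (Real.measurable_exp.comp he).ennreal_ofReal
    have hGm' : Measurable[hist A Y t] G' :=
      (Real.measurable_exp.comp (he.sub hwm)).ennreal_ofReal
    have hh := harm (t + 1) (by omega) a
    rw [Nat.add_sub_cancel] at hh
    calc _ = ∫⁻ ω in B, ENNReal.ofReal (Real.exp (armDev p A a (t + 1) ω)) ∂P
            + ∫⁻ ω in Bᶜ, ENNReal.ofReal (Real.exp (armDev p A a (t + 1) ω)) ∂P :=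
          (lintegral_add_compl _ hB).symm
      _ = ∫⁻ ω in B, G' ω ∂P + ∫⁻ ω in Bᶜ, G ω ∂P := by
          congr 1
          · refine setLIntegral_congr_fun hB fun ω hω => ?_
            have hω' : A (t + 1) ω = a := hω
            simp only [hG', armDev_succ, if_pos hω', hq, hwdef]
            congr 2
            ring
          · refine setLIntegral_congr_fun hB.compl fun ω hω => ?_
            have hω' : ¬ A (t + 1) ω = a := hω
            simp only [hG, armDev_succ, if_neg hω', hq, hwdef]
            congr 2
            ring
      _ = ∫⁻ ω, G' ω * ENNReal.ofReal (q ω) ∂P + ∫⁻ ω, G ω * ENNReal.ofReal (1 - q ω) ∂P := by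
          rw [setLIntegral_of_condExp hle P hB hh hGm',
            setLIntegral_compl_of_condExp hle P hB hh hGm]
      _ = ∫⁻ ω, (G' ω * ENNReal.ofReal (q ω) + G ω * ENNReal.ofReal (1 - q ω)) ∂P := by
          rw [lintegral_add_left]
          exact (hGm'.mono hle le_rfl).mul (hqm.mono hle le_rfl).ennreal_ofReal
      _ ≤ ∫⁻ ω, ENNReal.ofReal (Real.exp (armDev p A a t ω)) ∂P := by
          refine lintegral_mono fun ω => ?_
          obtain ⟨h0, h1⟩ := hp0 (t + 1) (by omega) ω a
          simp only [hG, hG']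
          rw [← ENNReal.ofReal_mul (Real.exp_pos _).le, ← ENNReal.ofReal_mul (Real.exp_pos _).le,
            ← ENNReal.ofReal_add (mul_nonneg (Real.exp_pos _).le h0)
              (mul_nonneg (Real.exp_pos _).le (sub_nonneg.2 h1))]
          refine ENNReal.ofReal_le_ofReal ?_
          have h := exp_step_le (weight_nonneg A a t ω) (weight_le_one A a t ω) h0
          have h2 := mul_le_mul_of_nonneg_left h (Real.exp_pos (armDev p A a t ω)).le
          rw [sub_eq_add_neg, Real.exp_add, Real.exp_add]
          simp only [hq, hwdef]
          linarith
      _ ≤ 1 := ih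

lemma measure_armDev_ge_le {Ω : Type*} [MeasurableSpace Ω] {K : ℕ} {P : Measure Ω}
    [IsProbabilityMeasure P] {p : ℕ → Ω → Fin K → ℝ} {A : ℕ → Ω → Fin K} {Y : ℕ → Ω → ℝ}
    (hA : ∀ t, Measurable (A t)) (hY : ∀ t, Measurable (Y t))
    (hpmeas : ∀ t, 1 ≤ t → Measurable[hist A Y (t - 1)] (p t))
    (hp0 : ∀ t, 1 ≤ t → ∀ ω a, 0 ≤ p t ω a ∧ p t ω a ≤ 1)
    (harm : ∀ t, 1 ≤ t → ∀ a : Fin K,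
      (P[({ω | A t ω = a}).indicator (fun _ => (1 : ℝ)) | hist A Y (t - 1)])
        =ᵐ[P] fun ω => p t ω a) (a : Fin K) (t : ℕ) (ht : 1 ≤ t) :
    P.real {ω | 2 * Real.log t ≤ armDev p A a t ω} ≤ 1 / (t : ℝ) ^ 2 := by
  have ht0 : (0 : ℝ) < t := by exact_mod_cast ht
  have h := measure_exp_ge_le (P := P) (X := armDev p A a t)
    ((measurable_armDev hpmeas a t).mono (hist_le hA hY t) le_rfl) (2 * Real.log t)
    (lintegral_exp_armDev_le hA hY hpmeas hp0 harm a t)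
  refine ENNReal.toReal_le_of_le_ofReal (by positivity) (h.trans (le_of_eq ?_))
  congr 1
  rw [Real.exp_neg, one_div, mul_comm, Real.exp_mul, Real.exp_log ht0]
  norm_cast

/-! ### Deterministic bounds on a trajectory -/

/-- The weighted pulls sum to `O(√N_a(t))`, as `∑_{n ≤ N} 1/√n` does. -/
lemma sum_weight_le {Ω : Type*} {K : ℕ} (A : ℕ → Ω → Fin K) (a : Fin K) (t : ℕ) (ω : Ω) :
    ∑ r ∈ Finset.Icc 1 t, (if A r ω = a then weight A a (r - 1) ω else 0)
      ≤ 3 * Real.sqrt (pulls A a t ω) := by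
  induction t with
  | zero => simp [pulls]
  | succ t ih =>
    rw [Finset.sum_Icc_succ_top (by omega), pulls_succ, Nat.add_sub_cancel]
    split_ifs with h
    · rcases Nat.eq_zero_or_pos (pulls A a t ω) with h0 | h0
      · rw [h0] at ih ⊢
        have := weight_le_one A a t ω
        simp at ih ⊢
        linarith
      · set n := pulls A a t ω with hn
        have hn0 : (1 : ℝ) ≤ n := by exact_mod_cast h0
        have hw : weight A a t ω = 1 / Real.sqrt n := by
          unfold weight
          rw [← hn, max_eq_left h0]
        have hs := Real.sq_sqrt (show (0 : ℝ) ≤ n by linarith)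
        have hs' := Real.sq_sqrt (show (0 : ℝ) ≤ n + 1 by linarith)
        have hp : 0 < Real.sqrt n := Real.sqrt_pos.2 (by linarith)
        have hp' : 0 < Real.sqrt (n + 1) := Real.sqrt_pos.2 (by linarith)
        have h2 : Real.sqrt (n + 1) ≤ 2 * Real.sqrt n := by nlinarith
        have h1 : 1 / Real.sqrt n ≤ 3 * (Real.sqrt (n + 1) - Real.sqrt n) := by
          rw [div_le_iff₀ hp]
          have e : (Real.sqrt (n + 1) - Real.sqrt n) * (Real.sqrt (n + 1) + Real.sqrt n) = 1 := by
            nlinarith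
          have h3 : 0 ≤ Real.sqrt (n + 1) - Real.sqrt n :=
            sub_nonneg.2 (Real.sqrt_le_sqrt (by linarith))
          nlinarith
        rw [hw]
        push_cast
        linarith
    · simpa using ih

lemma rewardDev_eq {Ω : Type*} {K : ℕ} (A : ℕ → Ω → Fin K) (Y : ℕ → Ω → ℝ) (m : ℝ) (a : Fin K)
    (t : ℕ) (ω : Ω) : rewardDev A Y m a t ω =
      (∑ s ∈ Finset.Icc 1 t, if A s ω = a then Y s ω else 0) - pulls A a t ω * m := by
  unfold rewardDev pulls
  push_cast
  rw [Finset.sum_mul, ← Finset.sum_sub_distrib]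
  refine Finset.sum_congr rfl fun s _ => ?_
  split_ifs <;> simp

/-- While the confidence interval is valid, the index is an upper bound on the mean and exceeds
it by at most twice the confidence width. The case of an unpulled arm uses `2 log 2 ≥ 1`. -/
lemma ucbIndex_bounds {Ω : Type*} {K : ℕ} {A : ℕ → Ω → Fin K} {Y : ℕ → Ω → ℝ} {m : ℝ}
    {a : Fin K} {t : ℕ} {ω : Ω} (ht : 2 ≤ t) (hm0 : 0 ≤ m) (hm1 : m ≤ 1)
    (hω : ω ∉ badConf A Y m a t) :
    m ≤ ucbIndex A Y a t ω ∧
      ucbIndex A Y a t ω ≤ m + 2 * Real.sqrt (2 * Real.log t) * weight A a t ω := by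
  have hlog : 1 ≤ 2 * Real.log t := by
    have h1 : Real.log 2 ≤ Real.log t := Real.log_le_log (by norm_num) (by exact_mod_cast ht)
    have h2 := Real.log_two_gt_d9
    linarith
  have hs : 1 ≤ Real.sqrt (2 * Real.log t) := by rwa [Real.one_le_sqrt]
  unfold ucbIndex
  rw [if_neg (by omega), Real.sqrt_div (by linarith)]
  have hw : Real.sqrt (2 * Real.log t) / Real.sqrt ((max (pulls A a t ω) 1 : ℕ) : ℝ)
      = Real.sqrt (2 * Real.log t) * weight A a t ω := by
    unfold weight; ring
  rw [hw]
  unfold empMean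
  split_ifs with h0
  · have hw1 : weight A a t ω = 1 := by simp [weight, h0]
    rw [hw1]
    constructor <;> linarith
  · have hn : 1 ≤ pulls A a t ω := by omega
    have hn0 : (0 : ℝ) < pulls A a t ω := by exact_mod_cast hn
    have hdev : |rewardDev A Y m a t ω| ≤
        pulls A a t ω * (Real.sqrt (2 * Real.log t) * weight A a t ω) := by
      have h : ¬ (_ ∧ _) := hω
      have h' := not_lt.1 fun hlt => h ⟨hn, hlt⟩
      rw [Real.sqrt_div (by linarith)] at h'
      rwa [← hw, max_eq_left hn]
    rw [rewardDev_eq] at hdev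
    obtain ⟨h1, h2⟩ := abs_le.1 hdev
    have e : (∑ s ∈ Finset.Icc 1 t, if A s ω = a then Y s ω else 0) =
        pulls A a t ω * ((∑ s ∈ Finset.Icc 1 t, if A s ω = a then Y s ω else 0)
          / (pulls A a t ω : ℝ)) := by field_simp
    set z := (∑ s ∈ Finset.Icc 1 t, if A s ω = a then Y s ω else 0) / (pulls A a t ω : ℝ)
    rw [e] at h1 h2
    constructor
    · have : (pulls A a t ω : ℝ) * m ≤
          pulls A a t ω * (z + Real.sqrt (2 * Real.log t) * weight A a t ω) := by linarith
      exact le_of_mul_le_mul_left this hn0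
    · have : (pulls A a t ω : ℝ) * z ≤
          pulls A a t ω * (m + Real.sqrt (2 * Real.log t) * weight A a t ω) := by linarith
      have := le_of_mul_le_mul_left this hn0
      linarith

/-- A value attained by a linear functional on the polytope is at most its value at some vertex. -/
lemma exists_ext_ge {K : ℕ} (ExtP : Finset (Fin K → ℝ)) (μ : Fin K → ℝ) (M : ℝ)
    (h : ∃ q ∈ convexHull ℝ (ExtP : Set (Fin K → ℝ)), dot q μ = M) :
    ∃ q ∈ ExtP, M ≤ dot q μ := by
  by_contra! hcon
  obtain ⟨q, hq, hqM⟩ := h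
  have hlin : IsLinearMap ℝ fun q : Fin K → ℝ => dot q μ :=
    ⟨fun x y => by simp [dot, add_mul, Finset.sum_add_distrib],
      fun c x => by simp [dot, mul_assoc, Finset.mul_sum]⟩
  have hsub := convexHull_min (s := (ExtP : Set (Fin K → ℝ))) (t := {q | dot q μ < M})
    (fun x hx => hcon x hx) (convex_halfSpace_lt hlin M)
  exact absurd hqM (hsub hq).ne

/-- The gap of the vertex chosen after round `s` is controlled by its exploration weights. -/
lemma gap_le_weights {Ω : Type*} {K : ℕ} {A : ℕ → Ω → Fin K} {Y : ℕ → Ω → ℝ} {μ : Fin K → ℝ}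
    (hμ0 : ∀ a, 0 ≤ μ a) (hμ1 : ∀ a, μ a ≤ 1) {s : ℕ} {ω : Ω} (hs : 2 ≤ s)
    (hω : ∀ a, ω ∉ badConf A Y (μ a) a s) {x q : Fin K → ℝ} {M : ℝ} (hx : ∀ a, 0 ≤ x a)
    (hq : ∀ a, 0 ≤ q a) (hqM : M ≤ dot q μ)
    (hmax : dot q (fun a => ucbIndex A Y a s ω) ≤ dot x (fun a => ucbIndex A Y a s ω)) :
    M - dot x μ ≤ 2 * Real.sqrt (2 * Real.log s) * ∑ a, weight A a s ω * x a := by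
  have h1 : dot q μ ≤ dot q (fun a => ucbIndex A Y a s ω) :=
    Finset.sum_le_sum fun a _ => mul_le_mul_of_nonneg_left
      (ucbIndex_bounds hs (hμ0 a) (hμ1 a) (hω a)).1 (hq a)
  have h2 : dot x (fun a => ucbIndex A Y a s ω) ≤ dot x μ +
      2 * Real.sqrt (2 * Real.log s) * ∑ a, weight A a s ω * x a := by
    unfold dot
    rw [Finset.mul_sum, ← Finset.sum_add_distrib]
    refine Finset.sum_le_sum fun a _ => ?_
    have := mul_le_mul_of_nonneg_left
      (ucbIndex_bounds hs (hμ0 a) (hμ1 a) (hω a)).2 (hx a)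
    linarith
  linarith

/-- The growth comparison: `√(log t) (√t + log t)` is negligible with respect to `t`, with an
explicit threshold. Everything is expressed through `u = t^{1/4}`, using `log t ≤ 4 u`. -/
lemma growth_lt {k d : ℝ} (hk : 0 ≤ k) (hd : 0 < d) {t : ℝ}
    (ht : (1760 * k / d + 2) ^ 4 ≤ t) :
    2 * Real.sqrt (2 * Real.log t) * (k * (6 * Real.sqrt t + 4 * Real.log t))
      < d * (t / 4 - 1) := by
  have hc : 0 ≤ 1760 * k / d := by positivity
  set c := 1760 * k / d with hcdef
  have hck : c * d = 1760 * k := by rw [hcdef]; field_simp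
  have ht0 : 0 < t := lt_of_lt_of_le (by positivity) ht
  set u := Real.sqrt (Real.sqrt t) with hu
  have hu2 : u ^ 2 = Real.sqrt t := Real.sq_sqrt (Real.sqrt_nonneg t)
  have hu4 : u ^ 4 = t := by
    rw [show u ^ 4 = (u ^ 2) ^ 2 by ring, hu2, Real.sq_sqrt ht0.le]
  have hu0 : 0 ≤ u := Real.sqrt_nonneg _
  have huc : c + 2 ≤ u := by
    rw [← hu4] at ht
    exact le_of_pow_le_pow_left₀ (by norm_num) hu0 ht
  have hL : Real.log t ≤ 4 * u := by
    rw [← hu4, Real.log_pow]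
    have := Real.log_le_sub_one_of_pos (show 0 < u by linarith)
    push_cast
    linarith
  have hL0 : 0 ≤ Real.log t := by
    rw [← hu4]
    exact Real.log_nonneg (one_le_pow₀ (by linarith))
  have hS : Real.sqrt (2 * Real.log t) ≤ 5 * u := by
    rw [Real.sqrt_le_left (by linarith)]
    nlinarith
  have h1 : 2 * Real.sqrt (2 * Real.log t) * (k * (6 * Real.sqrt t + 4 * Real.log t))
      ≤ 2 * (5 * u) * (k * (6 * u ^ 2 + 4 * (4 * u))) := by
    rw [← hu2]
    gcongr
  have h2 : 2 * (5 * u) * (k * (6 * u ^ 2 + 4 * (4 * u))) ≤ 220 * k * u ^ 3 := by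
    have : 0 ≤ k * u ^ 2 * (u - 1) := mul_nonneg (by positivity) (by linarith)
    nlinarith
  have h3 : 220 * k * u ^ 3 = d / 8 * (c * u ^ 3) := by linear_combination (-(u ^ 3) / 8) * hck
  have h4 : c * u ^ 3 < u ^ 4 - 8 := by
    have : (2 : ℝ) ^ 3 ≤ u ^ 3 := pow_le_pow_left₀ (by norm_num) (by linarith) 3
    nlinarith [mul_le_mul_of_nonneg_right huc (show 0 ≤ u ^ 3 by positivity)]
  have h5 : d / 8 * (c * u ^ 3) < d * (u ^ 4 / 4 - 1) := by
    have : (0 : ℝ) ≤ u ^ 4 := by positivity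
    nlinarith
  rw [← hu4] at h1 ⊢
  linarith

/-- **Statement 0** (Theorem 1, Case 1): the diversity-preserving UCB algorithm, run on any
bandit problem over `D_{[0,1]}` with a finite-polytope diversity-preserving set `Pset`, has
regret at most `(24 K (ln(1+T))² + K + 2)/Δ` for every horizon `T ≥ 1`. -/
theorem ucb_regret_general_bound
    {Ω : Type*} [MeasurableSpace Ω] {K : ℕ} (hK : 1 ≤ K)
    (P : Measure Ω) [IsProbabilityMeasure P]
    -- the bandit problem: distributions over [0,1] with means μ
    (ν : Fin K → Measure ℝ) (hνprob : ∀ a, IsProbabilityMeasure (ν a))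
    (hνsupp : ∀ a, (ν a) (Set.Icc (0 : ℝ) 1)ᶜ = 0)
    (μ : Fin K → ℝ) (hμ : ∀ a, μ a = ∫ x, x ∂(ν a))
    -- the diversity-preserving set: a finite polytope of probability vectors
    (ExtP : Finset (Fin K → ℝ)) (hExtNe : ExtP.Nonempty)
    (hExtProb : ∀ p ∈ ExtP, (∀ a, 0 ≤ p a) ∧ ∑ a, p a = 1)
    (Pset : Set (Fin K → ℝ)) (hPset : Pset = convexHull ℝ (ExtP : Set (Fin K → ℝ)))
    -- optimal value M and minimal positive gap Δ (at least one p ∈ Ext(Pset) has Δ(p) > 0)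
    (M : ℝ) (hM : IsGreatest {x | ∃ p ∈ Pset, dot p μ = x} M)
    (Δ : ℝ) (hΔ : IsLeast {x | ∃ p ∈ ExtP, M - dot p μ = x ∧ 0 < x} Δ)
    -- the processes generated by the diversity-preserving UCB algorithm
    (p : ℕ → Ω → Fin K → ℝ) (A : ℕ → Ω → Fin K) (Y : ℕ → Ω → ℝ)
    (hA : ∀ t, Measurable (A t)) (hY : ∀ t, Measurable (Y t))
    (hpmeas : ∀ t, 1 ≤ t → Measurable[hist A Y (t - 1)] (p t))
    -- UCB action choice: p_t maximizes ⟨·, U(t-1)⟩ over Ext(Pset)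
    (hUCB : ∀ t, 1 ≤ t → ∀ ω, p t ω ∈ ExtP ∧
      ∀ q ∈ ExtP, dot q (fun a => ucbIndex A Y a (t - 1) ω)
        ≤ dot (p t ω) (fun a => ucbIndex A Y a (t - 1) ω))
    -- given the past, the arm A_t is drawn according to p_t
    (harm : ∀ t, 1 ≤ t → ∀ a : Fin K,
      (P[({ω | A t ω = a}).indicator (fun _ => (1 : ℝ)) | hist A Y (t - 1)])
        =ᵐ[P] fun ω => p t ω a)
    -- given the past and A_t, the reward Y_t is drawn according to ν_{A_t}
    (hreward : ∀ t, 1 ≤ t → ∀ s : Set ℝ, MeasurableSet s →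
      (P[({ω | Y t ω ∈ s}).indicator (fun _ => (1 : ℝ)) |
          hist A Y (t - 1) ⊔ MeasurableSpace.comap (A t) inferInstance])
        =ᵐ[P] fun ω => ((ν (A t ω)) s).toReal)
    -- `p★_min(ν) > 0`: every optimal mixed action puts positive mass on every arm
    (hpstarmin : ∀ q ∈ Pset, dot q μ = M → ∀ a, 0 < q a)
    -- `N★(t)`: number of rounds `s ≤ t` at which an optimal mixed action was played
    (Nstar : ℕ → Ω → ℝ)
    (hNstar : ∀ t ω, Nstar t ω
      = ∑ s ∈ Finset.Icc 1 t, if dot (p s ω) μ = M then (1 : ℝ) else 0) :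
    (∃ C : ℝ, ∀ t : ℕ, 1 ≤ t →
        (P {ω | Nstar t ω ≤ t / 2}).toReal ≤ C / t ^ 2) ∧
      Summable (fun t : ℕ => (P {ω | Nstar t ω ≤ t / 2}).toReal) := by
  have hμ0 : ∀ a, 0 ≤ μ a := fun a => by
    rw [hμ a]
    refine integral_nonneg_of_ae ?_
    have : ∀ᵐ x ∂(ν a), x ∈ Set.Icc (0 : ℝ) 1 := by rw [ae_iff]; exact hνsupp a
    filter_upwards [this] with x hx using hx.1
  have hμ1 : ∀ a, μ a ≤ 1 := fun a => by
    have := hνprob a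
    have hae : ∀ᵐ x ∂(ν a), x ∈ Set.Icc (0 : ℝ) 1 := by rw [ae_iff]; exact hνsupp a
    rw [hμ a]
    calc ∫ x, x ∂(ν a) ≤ ∫ _, (1 : ℝ) ∂(ν a) := by
          refine integral_mono_of_nonneg ?_ (integrable_const _) ?_
          · filter_upwards [hae] with x hx using hx.1
          · filter_upwards [hae] with x hx using hx.2
      _ = 1 := by simp
  have hp01 : ∀ t, 1 ≤ t → ∀ ω a, 0 ≤ p t ω a ∧ p t ω a ≤ 1 := fun t ht ω a => by
    obtain ⟨h0, h1⟩ := hExtProb _ (hUCB t ht ω).1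
    exact ⟨h0 a, h1 ▸ Finset.single_le_sum (fun b _ => h0 b) (Finset.mem_univ a)⟩
  have hΔ0 : 0 < Δ := by
    obtain ⟨q, -, -, h⟩ := hΔ.1
    exact h
  obtain ⟨q, hqE, hqM⟩ : ∃ q ∈ ExtP, M ≤ dot q μ := exists_ext_ge ExtP μ M (hPset ▸ hM.1)
  have hgap : ∀ x ∈ ExtP, dot x μ ≠ M → Δ ≤ M - dot x μ := fun x hx hne => by
    have hle : dot x μ ≤ M :=
      hM.2 ⟨x, hPset ▸ subset_convexHull ℝ _ (Finset.mem_coe.2 hx), rfl⟩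
    exact hΔ.2 ⟨x, hx, rfl, sub_pos.2 (lt_of_le_of_ne hle hne)⟩
  set T₀ : ℝ := (1760 * (K : ℝ) / Δ + 2) ^ 4 with hT₀
  have hT16 : 16 ≤ T₀ := by
    have h : (0 : ℝ) ≤ 1760 * (K : ℝ) / Δ := by positivity
    calc (16 : ℝ) = 2 ^ 4 := by norm_num
      _ ≤ T₀ := pow_le_pow_left₀ (by norm_num) (by linarith) 4
  have main : ∀ t : ℕ, T₀ ≤ t → P.real {ω | Nstar t ω ≤ t / 2} ≤ 129 * K / (t : ℝ) ^ 2 := by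
    intro t ht
    have ht16 : 16 ≤ t := by exact_mod_cast hT16.trans ht
    have ht0 : (0 : ℝ) < t := by exact_mod_cast (show 0 < t by omega)
    have hlogt : 0 ≤ Real.log t := Real.log_nonneg (by exact_mod_cast (show 1 ≤ t by omega))
    set I : Finset ℕ := (Finset.Icc 1 t).filter fun s => t ≤ 4 * s with hI
    set bad₁ : Set Ω := ⋃ a ∈ (Finset.univ : Finset (Fin K)),
      {ω | 2 * Real.log t ≤ armDev p A a t ω} with hbad₁
    set bad₂ : Set Ω := ⋃ s ∈ I, ⋃ a ∈ (Finset.univ : Finset (Fin K)),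
      badConf A Y (μ a) a s with hbad₂
    have hsub : {ω | Nstar t ω ≤ t / 2} ⊆ bad₁ ∪ bad₂ := by
      intro ω hω
      by_contra hbad
      have hN : Nstar t ω ≤ t / 2 := hω
      have hg₁ : ∀ a, armDev p A a t ω < 2 * Real.log t := fun a => by
        by_contra h
        refine hbad (Or.inl ?_)
        simp only [hbad₁, Set.mem_iUnion]
        exact ⟨a, Finset.mem_univ a, not_lt.1 h⟩
      have hg₂ : ∀ s ∈ I, ∀ a, ω ∉ badConf A Y (μ a) a s := fun s hs a h => by
        refine hbad (Or.inr ?_)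
        simp only [hbad₂, Set.mem_iUnion]
        exact ⟨s, hs, a, Finset.mem_univ a, h⟩
      have hwp : ∀ a, ∑ r ∈ Finset.Icc 1 t, weight A a (r - 1) ω * p r ω a
          ≤ 6 * Real.sqrt t + 4 * Real.log t := fun a => by
        have h1 := hg₁ a
        have h2 := sum_weight_le A a t ω
        have h3 : Real.sqrt (pulls A a t ω) ≤ Real.sqrt t :=
          Real.sqrt_le_sqrt (by exact_mod_cast pulls_le A a t ω)
        rw [armDev, Finset.sum_sub_distrib, ← Finset.sum_div] at h1
        linarith
      set S := 2 * Real.sqrt (2 * Real.log t) with hS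
      have hS0 : 0 ≤ S := by positivity
      -- Early rounds, where confidence is not controlled, are charged their full gap.
      have hround : ∀ r ∈ Finset.Icc 1 t,
          Δ * (1 - if dot (p r ω) μ = M then (1 : ℝ) else 0) ≤
            S * ∑ a, weight A a (r - 1) ω * p r ω a
              + Δ * (if 4 * (r - 1) < t then (1 : ℝ) else 0) := by
        intro r hr
        rw [Finset.mem_Icc] at hr
        have hsum0 : 0 ≤ ∑ a, weight A a (r - 1) ω * p r ω a :=
          Finset.sum_nonneg fun a _ =>
            mul_nonneg (weight_nonneg A a (r - 1) ω) (hp01 r hr.1 ω a).1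
        by_cases hopt : dot (p r ω) μ = M
        · rw [if_pos hopt, sub_self, mul_zero]
          have : 0 ≤ Δ * (if 4 * (r - 1) < t then (1 : ℝ) else 0) := by
            split_ifs <;> simp [hΔ0.le]
          have := mul_nonneg hS0 hsum0
          linarith
        · rw [if_neg hopt, sub_zero, mul_one]
          by_cases hearly : 4 * (r - 1) < t
          · rw [if_pos hearly, mul_one]
            have := mul_nonneg hS0 hsum0
            linarith
          · rw [if_neg hearly, mul_zero, add_zero]
            have hrI : r - 1 ∈ I := by
              rw [hI, Finset.mem_filter, Finset.mem_Icc]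
              omega
            obtain ⟨hpE, hmax⟩ := hUCB r hr.1 ω
            have h1 := gap_le_weights (A := A) (Y := Y) hμ0 hμ1 (s := r - 1) (by omega)
              (hg₂ _ hrI) (hExtProb _ hpE).1 (hExtProb _ hqE).1 hqM (hmax q hqE)
            have h2 : Real.log ((r - 1 : ℕ) : ℝ) ≤ Real.log t :=
              Real.log_le_log (by exact_mod_cast (show 0 < r - 1 by omega))
                (by exact_mod_cast (show r - 1 ≤ t by omega))
            calc Δ ≤ M - dot (p r ω) μ := hgap _ hpE hopt
              _ ≤ _ := h1
              _ ≤ S * ∑ a, weight A a (r - 1) ω * p r ω a := by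
                  rw [hS]
                  gcongr
      have hsum := Finset.sum_le_sum hround
      rw [← Finset.mul_sum, Finset.sum_sub_distrib, ← hNstar t ω, Finset.sum_add_distrib,
        ← Finset.mul_sum, ← Finset.mul_sum, Finset.sum_comm] at hsum
      have hcard : ∑ r ∈ Finset.Icc 1 t, (if 4 * (r - 1) < t then (1 : ℝ) else 0)
          ≤ t / 4 + 1 := by
        rw [Finset.sum_boole]
        have h1 : ((Finset.Icc 1 t).filter fun r => 4 * (r - 1) < t) ⊆
            Finset.Icc 1 (t / 4 + 1) := fun r hr => by
          rw [Finset.mem_filter, Finset.mem_Icc] at hr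
          rw [Finset.mem_Icc]
          omega
        have h2 := Finset.card_le_card h1
        rw [Nat.card_Icc, Nat.add_sub_cancel] at h2
        have h3 : ((t / 4 : ℕ) : ℝ) ≤ (t : ℝ) / 4 := by exact_mod_cast Nat.cast_div_le
        calc _ ≤ ((t / 4 + 1 : ℕ) : ℝ) := by exact_mod_cast h2
          _ ≤ _ := by push_cast; linarith
      have hK' : ∑ a, ∑ r ∈ Finset.Icc 1 t, weight A a (r - 1) ω * p r ω a
          ≤ K * (6 * Real.sqrt t + 4 * Real.log t) := by
        calc _ ≤ ∑ _a : Fin K, (6 * Real.sqrt t + 4 * Real.log t) :=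
              Finset.sum_le_sum fun a _ => hwp a
          _ = _ := by rw [Finset.sum_const, Finset.card_univ, Fintype.card_fin, nsmul_eq_mul]
      have hgrow := growth_lt (k := K) (Nat.cast_nonneg K) hΔ0 ht
      have h1 := mul_le_mul_of_nonneg_left hK' hS0
      have h2 := mul_le_mul_of_nonneg_left hcard hΔ0.le
      have h3 := mul_le_mul_of_nonneg_left hN hΔ0.le
      simp only [Finset.sum_const, Nat.card_Icc, Nat.add_sub_cancel, nsmul_eq_mul, mul_one] at hsum
      rw [← hS] at hgrow
      nlinarith
    have hP₁ : P.real bad₁ ≤ K / (t : ℝ) ^ 2 := by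
      calc P.real bad₁ ≤ ∑ a : Fin K, P.real {ω | 2 * Real.log t ≤ armDev p A a t ω} :=
            measureReal_biUnion_finset_le _ _
        _ ≤ ∑ _a : Fin K, 1 / (t : ℝ) ^ 2 := Finset.sum_le_sum fun a _ =>
            measure_armDev_ge_le hA hY hpmeas hp01 harm a t (by omega)
        _ = K / (t : ℝ) ^ 2 := by simp [div_eq_mul_inv]
    have hP₂ : P.real bad₂ ≤ 128 * K / (t : ℝ) ^ 2 := by
      calc P.real bad₂ ≤ ∑ s ∈ I, P.real (⋃ a ∈ (Finset.univ : Finset (Fin K)),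
              badConf A Y (μ a) a s) := measureReal_biUnion_finset_le _ _
        _ ≤ ∑ s ∈ I, 128 * K / (t : ℝ) ^ 3 := by
            refine Finset.sum_le_sum fun s hs => ?_
            rw [hI, Finset.mem_filter, Finset.mem_Icc] at hs
            have hst : (t : ℝ) / 4 ≤ s := by
              have : (t : ℝ) ≤ 4 * s := by exact_mod_cast hs.2
              linarith
            calc _ ≤ ∑ a : Fin K, P.real (badConf A Y (μ a) a s) :=
                  measureReal_biUnion_finset_le _ _
              _ ≤ ∑ _a : Fin K, 128 / (t : ℝ) ^ 3 := by
                  refine Finset.sum_le_sum fun a _ => ?_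
                  rw [hμ a]
                  refine (measure_badConf_le hA hY ν hνprob hνsupp hreward a s hs.1.1).trans ?_
                  calc 2 / (s : ℝ) ^ 3 ≤ 2 / ((t : ℝ) / 4) ^ 3 := by gcongr
                    _ = 128 / (t : ℝ) ^ 3 := by field_simp; norm_num
              _ = 128 * K / (t : ℝ) ^ 3 := by simp; ring
        _ ≤ t * (128 * K / (t : ℝ) ^ 3) := by
            rw [Finset.sum_const, nsmul_eq_mul]
            have h1 : I.card ≤ t := by
              simpa using Finset.card_filter_le (Finset.Icc 1 t) fun s => t ≤ 4 * s
            gcongr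
        _ = 128 * K / (t : ℝ) ^ 2 := by field_simp
    calc P.real {ω | Nstar t ω ≤ t / 2} ≤ P.real (bad₁ ∪ bad₂) :=
          measureReal_mono hsub (measure_ne_top _ _)
      _ ≤ P.real bad₁ + P.real bad₂ := measureReal_union_le _ _
      _ ≤ K / (t : ℝ) ^ 2 + 128 * K / (t : ℝ) ^ 2 := add_le_add hP₁ hP₂
      _ = 129 * K / (t : ℝ) ^ 2 := by ring
  have hbound : ∀ t : ℕ, 1 ≤ t →
      (P {ω | Nstar t ω ≤ t / 2}).toReal ≤ (T₀ ^ 2 + 129 * K) / (t : ℝ) ^ 2 := by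
    intro t ht
    have ht0 : (0 : ℝ) < t := by exact_mod_cast ht
    rcases le_total T₀ t with h | h
    · refine (main t h).trans ?_
      gcongr
      linarith [sq_nonneg T₀]
    · refine (measureReal_le_one (μ := P)).trans ?_
      rw [le_div_iff₀ (by positivity), one_mul]
      have h1 : (t : ℝ) ^ 2 ≤ T₀ ^ 2 := pow_le_pow_left₀ ht0.le h 2
      have h2 : (0 : ℝ) ≤ 129 * K := by positivity
      linarith
  refine ⟨⟨_, hbound⟩, ?_⟩
  rw [← summable_nat_add_iff 1]
  refine Summable.of_nonneg_of_le (fun _ => ENNReal.toReal_nonneg)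
    (fun t => hbound (t + 1) (by omega)) ?_
  rw [summable_nat_add_iff 1 (f := fun t : ℕ => (T₀ ^ 2 + 129 * (K : ℝ)) / (t : ℝ) ^ 2)]
  simp_rw [div_eq_mul_inv]
  exact (Real.summable_nat_pow_inv.2 (by norm_num)).mul_left _

end DivBanditUCB
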